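/- Let X be a real or complex normed space and let (x_n) and (y_n) be sequences in X such that ‖x_n + y_n‖ − ‖x_n‖ − ‖y_n‖ → 0. Then for any two bounded sequences (α_n), (β_n) of non-negative real numbers one also has ‖α_n x_n + β_n y_n‖ − α_n ‖x_n‖ − β_n ‖y_n‖ → 0. -/

import Mathlib

open Filter Topology

theorem aux_lower {𝕜 X : Type*} [RCLike 𝕜] [NormedAddCommGroup X] [NormedSpace 𝕜 X]
    (x y : X) (a b : ℝ) (hb : 0 ≤ b) (hab : b ≤ a) :
    a * (‖x + y‖ - ‖x‖ - ‖y‖) ≤ ‖(a : 𝕜) • x + (b : 𝕜) • y‖ - a * ‖x‖ - b * ‖y‖ := by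
  have e : (a : 𝕜) • (x + y) = ((a : 𝕜) • x + (b : 𝕜) • y) + ((a - b : ℝ) : 𝕜) • y := by
    rw [RCLike.ofReal_sub]
    module
  have h1 := norm_add_le ((a : 𝕜) • x + (b : 𝕜) • y) (((a - b : ℝ) : 𝕜) • y)
  rw [← e, norm_smul, norm_smul, RCLike.norm_ofReal, RCLike.norm_ofReal,
    abs_of_nonneg (hb.trans hab), abs_of_nonneg (sub_nonneg.2 hab)] at h1
  linarith

/-- If `(x_n)`, `(y_n)` are sequences in a real or complex normed space with
`‖x_n + y_n‖ - ‖x_n‖ - ‖y_n‖ → 0`, then for any bounded sequences `(α_n)`, `(β_n)` of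
non-negative reals, `‖α_n • x_n + β_n • y_n‖ - α_n ‖x_n‖ - β_n ‖y_n‖ → 0`. -/
theorem stmt_0 {𝕜 X : Type*} [RCLike 𝕜] [NormedAddCommGroup X] [NormedSpace 𝕜 X]
    (x y : ℕ → X)
    (h : Tendsto (fun n => ‖x n + y n‖ - ‖x n‖ - ‖y n‖) atTop (𝓝 0))
    (α β : ℕ → ℝ) (hα0 : ∀ n, 0 ≤ α n) (hβ0 : ∀ n, 0 ≤ β n)
    (hαb : ∃ C : ℝ, ∀ n, α n ≤ C) (hβb : ∃ C : ℝ, ∀ n, β n ≤ C) :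
    Tendsto (fun n => ‖(α n : 𝕜) • x n + (β n : 𝕜) • y n‖ - α n * ‖x n‖ - β n * ‖y n‖)
      atTop (𝓝 0) := by
  obtain ⟨A, hA⟩ := hαb
  obtain ⟨B, hB⟩ := hβb
  have h' := h.const_mul (max A B)
  rw [mul_zero] at h'
  refine tendsto_of_tendsto_of_tendsto_of_le_of_le h' tendsto_const_nhds ?_ ?_
  · intro n
    have hd : ‖x n + y n‖ - ‖x n‖ - ‖y n‖ ≤ 0 := by linarith [norm_add_le (x n) (y n)]
    show max A B * (‖x n + y n‖ - ‖x n‖ - ‖y n‖) ≤ _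
    rcases le_total (β n) (α n) with hc | hc
    · exact (mul_le_mul_of_nonpos_right ((hA n).trans (le_max_left A B)) hd).trans
        (aux_lower (𝕜 := 𝕜) (x n) (y n) _ _ (hβ0 n) hc)
    · have h2 := aux_lower (𝕜 := 𝕜) (y n) (x n) _ _ (hα0 n) hc
      have h3 := mul_le_mul_of_nonpos_right ((hB n).trans (le_max_right A B)) hd
      rw [add_comm (y n), add_comm ((β n : 𝕜) • y n)] at h2
      linarith
  · intro n
    have h1 := norm_add_le ((α n : 𝕜) • x n) ((β n : 𝕜) • y n)
    rw [norm_smul, norm_smul, RCLike.norm_ofReal, RCLike.norm_ofReal,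
      abs_of_nonneg (hα0 n), abs_of_nonneg (hβ0 n)] at h1
    show _ - _ - _ ≤ (0 : ℝ)
    linarith
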